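/- arXiv:2602.19032 — 4 statements merged into one kernel-verified Lean document; each statement's English description precedes it below -/
import Mathlib

section
/- The function δ1(τ) = (θ2(0,τ)^4 + θ3(0,τ)^4)/8 is a modular form of weight 2 over the congruence subgroup Γ0(2): it is holomorphic on the upper half-plane, holomorphic at the cusps, and satisfies δ1((aτ+b)/(cτ+d)) = (cτ+d)^2 δ1(τ) for every (a b; c d) ∈ Γ0(2). -/
open Complex Real Matrix CongruenceSubgroup

local notation "SL(2,ℤ)" => Matrix.SpecialLinearGroup (Fin 2) ℤ
local notation "ℍ" => UpperHalfPlane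

/-- The nome `q = e^{2πiτ}`. -/
noncomputable def qq (τ : ℂ) : ℂ := Complex.exp (2 * π * Complex.I * τ)

/-- The half-nome `q^{1/2} = e^{πiτ}`. -/
noncomputable def qh (τ : ℂ) : ℂ := Complex.exp (π * Complex.I * τ)

/-- The Jacobi theta constant `θ₁(0,τ) = 2 q^{1/8} ∏_{j≥1} (1-q^j)(1+q^j)^2`. -/
noncomputable def theta1 (τ : ℂ) : ℂ :=
  2 * Complex.exp (π * Complex.I * τ / 4) *
    ∏' j : ℕ, ((1 - qq τ ^ (j + 1)) * (1 + qq τ ^ (j + 1)) ^ 2)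

/-- The Jacobi theta constant `θ₂(0,τ) = ∏_{j≥1} (1-q^j)(1-q^{j-1/2})^2`. -/
noncomputable def theta2 (τ : ℂ) : ℂ :=
  ∏' j : ℕ, ((1 - qq τ ^ (j + 1)) * (1 - qh τ ^ (2 * j + 1)) ^ 2)

/-- The Jacobi theta constant `θ₃(0,τ) = ∏_{j≥1} (1-q^j)(1+q^{j-1/2})^2`. -/
noncomputable def theta3 (τ : ℂ) : ℂ :=
  ∏' j : ℕ, ((1 - qq τ ^ (j + 1)) * (1 + qh τ ^ (2 * j + 1)) ^ 2)

/-- `δ₁(τ) = (θ₂(0,τ)⁴ + θ₃(0,τ)⁴)/8`. -/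
noncomputable def delta1 (τ : ℂ) : ℂ := (theta2 τ ^ 4 + theta3 τ ^ 4) / 8

/-!
The theta constants are quotients of values of Dedekind's `η`, so the transformation law of `η`
under `τ ↦ -1/τ` and the product expansions show that `S` and `T` permute `θ₁⁴`, `θ₂⁴`, `θ₃⁴` up to
sign in weight `2`. Hence `SL(2,ℤ)` permutes the three forms `(θ₂⁴ + θ₃⁴)/8`, `-(θ₁⁴ + θ₃⁴)/8` and
`(θ₁⁴ - θ₂⁴)/8` exactly as it permutes the nonzero row vectors modulo `2`, with `δ₁` corresponding
to `(0, 1)`. The stabilizer of this vector is `Γ₁(2) = Γ₀(2)`, and holomorphy of `δ₁` at every cusp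
amounts to boundedness of the three forms at `i∞`.
-/

open Function ModularGroup
open UpperHalfPlane (IsBoundedAtImInfty mdifferentiable_iff ofComplex_apply_of_im_pos
  qParam_tendsto_atImInfty)
open scoped ModularForm Manifold

local notation "𝕢" => Function.Periodic.qParam

/-- The Euler function `φ(q) = ∏_{n ≥ 1} (1 - qⁿ)`, in terms of which the theta constants and `η`
are expressed; the product is meaningful for `‖q‖ < 1` only. -/
noncomputable def eulerFunction (q : ℂ) : ℂ := ∏' n : ℕ, (1 - q ^ (n + 1))

local notation "φ" => eulerFunction

section EulerFunction

variable {q : ℂ}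

lemma norm_sq_lt_one (hq : ‖q‖ < 1) : ‖q ^ 2‖ < 1 := by
  simpa using pow_lt_one₀ (norm_nonneg q) hq two_ne_zero

lemma eulerFunction_ne_zero (hq : ‖q‖ < 1) : φ q ≠ 0 := by
  simp only [eulerFunction, sub_eq_add_neg]
  refine tprod_one_add_ne_zero_of_summable (fun n h ↦ ?_) ?_
  · have hroot : q ^ (n + 1) = 1 := (sub_eq_zero.mp (by rwa [sub_eq_add_neg])).symm
    have hlt := pow_lt_one₀ (norm_nonneg q) hq n.succ_ne_zero
    rw [← norm_pow, hroot, norm_one] at hlt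
    exact hlt.false
  · simpa using (summable_nat_add_iff 1).mpr (summable_geometric_of_lt_one (norm_nonneg q) hq)

lemma differentiableOn_eulerFunction : DifferentiableOn ℂ φ (Metric.ball 0 1) :=
  ModularForm.differentiableOn_tprod_one_sub_pow

lemma multipliable_one_add_pow (hq : ‖q‖ < 1) : Multipliable fun j : ℕ ↦ 1 + q ^ (j + 1) :=
  multipliable_one_add_of_summable <| by
    simpa using (summable_nat_add_iff 1).mpr (summable_geometric_of_lt_one (norm_nonneg q) hq)

lemma multipliable_one_sub_odd_pow (hq : ‖q‖ < 1) :
    Multipliable fun j : ℕ ↦ 1 - q ^ (2 * j + 1) := by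
  simp only [sub_eq_add_neg]
  refine multipliable_one_add_of_summable ?_
  simpa [pow_succ, pow_mul] using
    (summable_geometric_of_lt_one (by positivity)
      (pow_lt_one₀ (norm_nonneg q) hq two_ne_zero)).mul_right ‖q‖

lemma tprod_one_sub_odd_pow_mul_eulerFunction_sq (hq : ‖q‖ < 1) :
    (∏' j : ℕ, (1 - q ^ (2 * j + 1))) * φ (q ^ 2) = φ q := by
  have hexp (j : ℕ) : (q ^ 2) ^ (j + 1) = q ^ (2 * j + 1 + 1) := by ring
  have heven := ModularForm.multipliable_one_sub_pow (norm_sq_lt_one hq)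
  simp only [eulerFunction, hexp] at heven ⊢
  exact tprod_even_mul_odd (f := fun n ↦ 1 - q ^ (n + 1)) (multipliable_one_sub_odd_pow hq) heven

lemma tprod_one_add_pow_mul_eulerFunction (hq : ‖q‖ < 1) :
    (∏' j : ℕ, (1 + q ^ (j + 1))) * φ q = φ (q ^ 2) := by
  rw [eulerFunction, eulerFunction, ← (multipliable_one_add_pow hq).tprod_mul
    (ModularForm.multipliable_one_sub_pow hq)]
  exact tprod_congr fun j ↦ by ring

lemma tprod_one_sub_sq_pow_mul_one_sub_odd_pow_sq (hq : ‖q‖ < 1) :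
    ∏' j : ℕ, ((1 - (q ^ 2) ^ (j + 1)) * (1 - q ^ (2 * j + 1)) ^ 2) = φ q ^ 2 / φ (q ^ 2) := by
  have hodd := multipliable_one_sub_odd_pow hq
  rw [(ModularForm.multipliable_one_sub_pow (norm_sq_lt_one hq)).tprod_mul (hodd.pow 2),
    hodd.tprod_pow, ← eulerFunction, ← tprod_one_sub_odd_pow_mul_eulerFunction_sq hq]
  field_simp [eulerFunction_ne_zero (norm_sq_lt_one hq)]

lemma tprod_one_sub_pow_mul_one_add_pow_sq (hq : ‖q‖ < 1) :
    ∏' j : ℕ, ((1 - q ^ (j + 1)) * (1 + q ^ (j + 1)) ^ 2) = φ (q ^ 2) ^ 2 / φ q := by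
  have hadd := multipliable_one_add_pow hq
  rw [(ModularForm.multipliable_one_sub_pow hq).tprod_mul (hadd.pow 2), hadd.tprod_pow,
    ← eulerFunction, ← tprod_one_add_pow_mul_eulerFunction hq]
  field_simp [eulerFunction_ne_zero hq]

lemma differentiableOn_eulerFunction_comp_sq :
    DifferentiableOn ℂ (fun q ↦ φ (q ^ 2)) (Metric.ball 0 1) :=
  differentiableOn_eulerFunction.comp (by fun_prop) fun q hq ↦ by
    simpa only [mem_ball_zero_iff] using norm_sq_lt_one (mem_ball_zero_iff.mp hq)

lemma differentiableOn_eulerFunction_sq_div_eulerFunction_comp_sq :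
    DifferentiableOn ℂ (fun q ↦ φ q ^ 2 / φ (q ^ 2)) (Metric.ball 0 1) :=
  (differentiableOn_eulerFunction.pow 2).div differentiableOn_eulerFunction_comp_sq fun _ hq ↦
    eulerFunction_ne_zero (norm_sq_lt_one (mem_ball_zero_iff.mp hq))

lemma differentiableOn_eulerFunction_comp_sq_sq_div_eulerFunction :
    DifferentiableOn ℂ (fun q ↦ φ (q ^ 2) ^ 2 / φ q) (Metric.ball 0 1) :=
  (differentiableOn_eulerFunction_comp_sq.pow 2).div differentiableOn_eulerFunction fun _ hq ↦
    eulerFunction_ne_zero (mem_ball_zero_iff.mp hq)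

end EulerFunction

section QParam

variable {h : ℝ} {f : ℂ → ℂ}

lemma isBoundedAtImInfty_comp_qParam (hh : 0 < h) (hf : ContinuousAt f 0) :
    IsBoundedAtImInfty fun τ : ℍ ↦ f (𝕢 h τ) :=
  (hf.tendsto.comp (qParam_tendsto_atImInfty hh)).isBigO_one ℝ

lemma mdifferentiable_comp_qParam (hh : 0 < h) (hf : DifferentiableOn ℂ f (Metric.ball 0 1)) :
    MDiff fun τ : ℍ ↦ f (𝕢 h τ) := by
  have hcomp : DifferentiableOn ℂ (fun z ↦ f (𝕢 h z)) {z | 0 < z.im} :=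
    hf.comp Periodic.differentiable_qParam.differentiableOn fun z hz ↦
      mem_ball_zero_iff.mpr (Periodic.norm_qParam_lt_one hh hz)
  exact mdifferentiable_iff.mpr <| hcomp.congr fun z hz ↦ by
    simp only [Function.comp_apply, ofComplex_apply_of_im_pos hz]

lemma qParam_nat_mul (n : ℕ) (z : ℂ) : 𝕢 h (n * z) = 𝕢 h z ^ n := by
  rw [Periodic.qParam, Periodic.qParam, ← Complex.exp_nat_mul]
  ring_nf

end QParam

section Equivariant

variable {k : ℤ}

lemma vecMul_S {R : Type*} [CommRing R] (x y : R) : ![x, y] ᵥ* S = ![y, -x] := by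
  ext i
  fin_cases i <;>
    simp [vecMul_eq_sum, Matrix.SpecialLinearGroup.map_apply_coe, ModularGroup.coe_S]

lemma vecMul_T {R : Type*} [CommRing R] (x y : R) : ![x, y] ᵥ* T = ![x, x + y] := by
  ext i
  fin_cases i <;>
    simp [vecMul_eq_sum, Matrix.SpecialLinearGroup.map_apply_coe, ModularGroup.coe_T]

theorem slash_eq_vecMul_of_slash_S_of_slash_T {R : Type*} [CommRing R] {f : (Fin 2 → R) → ℍ → ℂ}
    (hS : ∀ v, f v ∣[k] S = f (v ᵥ* S)) (hT : ∀ v, f v ∣[k] T = f (v ᵥ* T))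
    (γ : SL(2,ℤ)) (v : Fin 2 → R) : f v ∣[k] γ = f (v ᵥ* γ) := by
  have hγ : γ ∈ Subgroup.closure {S, T} :=
    SpecialLinearGroup.SL2Z_generators ▸ Subgroup.mem_top γ
  induction hγ using Subgroup.closure_induction generalizing v with
  | mem g hg => rcases hg with rfl | rfl; exacts [hS v, hT v]
  | one => simp
  | mul a b _ _ ha hb =>
    rw [SlashAction.slash_mul, ha, hb, vecMul_vecMul, ← Matrix.SpecialLinearGroup.coe_mul,
      ← map_mul]
  | inv a _ ha =>
    set w : Fin 2 → R := v ᵥ* (a⁻¹ : SL(2,ℤ))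
    have hw : w ᵥ* a = v := by
      rw [vecMul_vecMul, ← Matrix.SpecialLinearGroup.coe_mul, ← map_mul, inv_mul_cancel, map_one,
        Matrix.SpecialLinearGroup.coe_one, vecMul_one]
    rw [← hw, ← ha, ← SlashAction.slash_mul, mul_inv_cancel, SlashAction.slash_one]

lemma vecMul_eq_self_of_mem_Gamma1 {N : ℕ} {γ : SL(2,ℤ)} (hγ : γ ∈ Gamma1 N) :
    ![(0 : ZMod N), 1] ᵥ* γ = ![0, 1] := by
  obtain ⟨-, hd, hc⟩ := (Gamma1_mem N γ).mp hγ
  ext i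
  fin_cases i <;> simp [vecMul_eq_sum, hd, hc]

theorem exists_modularForm_Gamma1_of_slash_S_of_slash_T {N : ℕ} [NeZero N]
    {f : (Fin 2 → ZMod N) → ℍ → ℂ}
    (hS : ∀ v, f v ∣[k] S = f (v ᵥ* S)) (hT : ∀ v, f v ∣[k] T = f (v ᵥ* T))
    (hholo : MDiff (f ![0, 1])) (hbdd : ∀ v, IsBoundedAtImInfty (f v)) :
    ∃ F : ModularForm (Gamma1 N) k, ⇑F = f ![0, 1] := by
  have hslash := slash_eq_vecMul_of_slash_S_of_slash_T hS hT
  refine ⟨{ toFun := f ![0, 1], slash_action_eq' := ?_, holo' := hholo, bdd_at_cusps' := ?_ }, rfl⟩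
  · rintro _ ⟨γ, hγ, rfl⟩
    exact (hslash γ _).trans (congrArg f (vecMul_eq_self_of_mem_Gamma1 hγ))
  · intro c hc
    rw [Subgroup.IsArithmetic.isCusp_iff_isCusp_SL2Z] at hc
    rw [OnePoint.isBoundedAt_iff_forall_SL2Z hc]
    intro γ _
    exact hslash γ _ ▸ hbdd _

lemma Gamma0_two_eq_Gamma1_two : Gamma0 2 = Gamma1 2 := by
  ext γ
  have hunit : ∀ a d : ZMod 2, a * d = 1 → a = 1 ∧ d = 1 := by decide
  rw [Gamma0_mem, Gamma1_mem]
  refine ⟨fun hc ↦ ?_, fun h ↦ h.2.2⟩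
  have hdet := congrArg (Int.cast : ℤ → ZMod 2) (γ.det_coe)
  simp only [det_fin_two, Int.cast_sub, Int.cast_mul, Int.cast_one, hc, mul_zero, sub_zero] at hdet
  exact ⟨(hunit _ _ hdet).1, (hunit _ _ hdet).2, hc⟩

end Equivariant

section SlashGenerators

variable {k : ℤ} (f : ℍ → ℂ)

lemma slash_T_apply (τ : ℍ) : (f ∣[k] T) τ = f ((1 : ℝ) +ᵥ τ) := by
  rw [ModularForm.SL_slash_apply, UpperHalfPlane.modular_T_smul, UpperHalfPlane.denom]
  simp [Matrix.SpecialLinearGroup.map_apply_coe, ModularGroup.coe_T]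

lemma slash_S_slash_S (hk : Even k) : (f ∣[k] S) ∣[k] S = f := by
  ext τ
  simp [SlashInvariantForm.slash_S_apply, hk.neg.neg_zpow, zpow_ne_zero k τ.ne_zero]

lemma S_eq_T_mul_S_mul_T_mul_S_mul_T : S = T * S * T * S * T := by
  decide

end SlashGenerators

section Theta

variable {z : ℂ}

lemma qq_eq_qParam (z : ℂ) : qq z = 𝕢 1 z := by simp [qq, Periodic.qParam]

lemma qh_eq_qParam (z : ℂ) : qh z = 𝕢 2 z := by
  rw [qh, Periodic.qParam, ofReal_ofNat]; ring_nf

lemma qParam_one_eq_sq (z : ℂ) : 𝕢 1 z = 𝕢 2 z ^ 2 := by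
  rw [Periodic.qParam, Periodic.qParam, ← Complex.exp_nat_mul]; push_cast; ring_nf

lemma theta1_eq_eulerFunction (hz : 0 < z.im) :
    theta1 z = 2 * 𝕢 8 z * (φ (𝕢 1 z ^ 2) ^ 2 / φ (𝕢 1 z)) := by
  have hexp : Complex.exp (π * Complex.I * z / 4) = 𝕢 8 z := by
    rw [Periodic.qParam, ofReal_ofNat]; ring_nf
  simp only [theta1, qq_eq_qParam, hexp]
  rw [tprod_one_sub_pow_mul_one_add_pow_sq (Periodic.norm_qParam_lt_one one_pos hz)]

lemma theta2_eq_eulerFunction (hz : 0 < z.im) :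
    theta2 z = φ (𝕢 2 z) ^ 2 / φ (𝕢 2 z ^ 2) := by
  simp only [theta2, qq_eq_qParam, qh_eq_qParam, qParam_one_eq_sq]
  exact tprod_one_sub_sq_pow_mul_one_sub_odd_pow_sq (Periodic.norm_qParam_lt_one two_pos hz)

lemma eta_eq_qParam_mul_eulerFunction (z : ℂ) : ModularForm.eta z = 𝕢 24 z * φ (𝕢 1 z) := rfl

lemma theta1_eq_eta (hz : 0 < z.im) :
    theta1 z = 2 * ModularForm.eta (2 * z) ^ 2 / ModularForm.eta z := by
  have hφ := eulerFunction_ne_zero (Periodic.norm_qParam_lt_one one_pos hz)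
  have h24 := Periodic.qParam_ne_zero (h := 24) z
  have hleading : 𝕢 24 (2 * z) ^ 2 = 𝕢 8 z * 𝕢 24 z := by
    simp only [Periodic.qParam, ← Complex.exp_nat_mul, ← Complex.exp_add]
    push_cast
    ring_nf
  have hnome : 𝕢 1 (2 * z) = 𝕢 1 z ^ 2 := qParam_nat_mul 2 z
  rw [theta1_eq_eulerFunction hz, eta_eq_qParam_mul_eulerFunction,
    eta_eq_qParam_mul_eulerFunction, hnome, mul_pow, hleading]
  field_simp

lemma theta2_eq_eta (hz : 0 < z.im) :
    theta2 z = ModularForm.eta (z / 2) ^ 2 / ModularForm.eta z := by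
  have hφ := eulerFunction_ne_zero (Periodic.norm_qParam_lt_one one_pos hz)
  have h24 := Periodic.qParam_ne_zero (h := 24) z
  have hleading : 𝕢 24 (z / 2) ^ 2 = 𝕢 24 z := by
    rw [← qParam_nat_mul]
    simp [mul_div_cancel₀]
  have hnome : 𝕢 1 (z / 2) = 𝕢 2 z := by
    rw [Periodic.qParam, Periodic.qParam]; push_cast; ring_nf
  rw [theta2_eq_eulerFunction hz, ← qParam_one_eq_sq, eta_eq_qParam_mul_eulerFunction,
    eta_eq_qParam_mul_eulerFunction, hnome, mul_pow, hleading]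
  field_simp

lemma qh_one_add (z : ℂ) : qh (1 + z) = -qh z := by
  rw [qh, mul_add, Complex.exp_add, mul_one, Complex.exp_pi_mul_I, neg_one_mul, qh]

lemma qq_one_add (z : ℂ) : qq (1 + z) = qq z := by
  rw [qq, mul_add, Complex.exp_add, mul_one, Complex.exp_two_pi_mul_I, one_mul, qq]

lemma theta1_one_add_pow_four (z : ℂ) : theta1 (1 + z) ^ 4 = -theta1 z ^ 4 := by
  have hexp (w : ℂ) : Complex.exp (π * Complex.I * w / 4) ^ 4 = qh w := by
    rw [← Complex.exp_nat_mul, qh]; push_cast; ring_nf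
  simp only [theta1, mul_pow, hexp, qq_one_add, qh_one_add]
  ring

lemma theta2_one_add (z : ℂ) : theta2 (1 + z) = theta3 z := by
  refine tprod_congr fun j ↦ ?_
  rw [qq_one_add, qh_one_add, (odd_two_mul_add_one j).neg_pow, sub_neg_eq_add]

lemma theta3_one_add (z : ℂ) : theta3 (1 + z) = theta2 z := by
  refine tprod_congr fun j ↦ ?_
  rw [qq_one_add, qh_one_add, (odd_two_mul_add_one j).neg_pow, ← sub_eq_add_neg]

lemma eta_neg_inv_pow_four (hz : 0 < z.im) :
    ModularForm.eta (-z)⁻¹ ^ 4 = -z ^ 2 * ModularForm.eta z ^ 4 := by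
  have hsqrt (w : ℂ) : w.sqrt ^ 4 = w ^ 2 := by
    rw [Complex.sqrt, pow_mul _ 2 2, ← Nat.cast_two, Complex.cpow_nat_inv_pow w two_ne_zero]
  have heta : ModularForm.eta (-z)⁻¹ = (Complex.I.sqrt)⁻¹ * (z.sqrt * ModularForm.eta z) := by
    simpa [neg_div, inv_neg] using ModularForm.eta_comp_eq_csqrt_I_inv hz
  rw [heta, mul_pow, mul_pow, inv_pow, hsqrt, hsqrt, Complex.I_sq]
  ring

lemma theta2_neg_inv_pow_four (hz : 0 < z.im) :
    theta2 (-z)⁻¹ ^ 4 = -z ^ 2 * theta1 z ^ 4 := by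
  have hz₀ : z ≠ 0 := by rintro rfl; simp at hz
  have heta := ModularForm.eta_ne_zero hz
  have hinv : 0 < ((-z)⁻¹).im := UpperHalfPlane.im_inv_neg_coe_pos ⟨z, hz⟩
  have hdouble : (-z)⁻¹ / 2 = (-(2 * z))⁻¹ := by field_simp
  have hetaDouble := eta_neg_inv_pow_four (z := 2 * z) (by simpa using hz)
  rw [theta2_eq_eta hinv, theta1_eq_eta hz, hdouble, div_pow, div_pow, mul_pow, ← pow_mul,
    ← pow_mul, pow_mul _ 4 2, pow_mul _ 4 2, hetaDouble, eta_neg_inv_pow_four hz]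
  field_simp

end Theta

/-- The fourth power `θ₁⁴`, restricted to `ℍ` so that the weight `2` slash action applies to it. -/
noncomputable def theta1PowFour (τ : ℍ) : ℂ := theta1 τ ^ 4

/-- The fourth power `θ₂⁴`, restricted to `ℍ` so that the weight `2` slash action applies to it. -/
noncomputable def theta2PowFour (τ : ℍ) : ℂ := theta2 τ ^ 4

/-- The fourth power `θ₃⁴`, restricted to `ℍ` so that the weight `2` slash action applies to it. -/
noncomputable def theta3PowFour (τ : ℍ) : ℂ := theta3 τ ^ 4

local notation "Θ₁" => theta1PowFour
local notation "Θ₂" => theta2PowFour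
local notation "Θ₃" => theta3PowFour

lemma theta1PowFour_slash_T : Θ₁ ∣[(2 : ℤ)] T = -Θ₁ := by
  ext τ
  simp [slash_T_apply, theta1PowFour, theta1_one_add_pow_four]

lemma theta2PowFour_slash_T : Θ₂ ∣[(2 : ℤ)] T = Θ₃ := by
  ext τ
  simp [slash_T_apply, theta2PowFour, theta3PowFour, theta2_one_add]

lemma theta3PowFour_slash_T : Θ₃ ∣[(2 : ℤ)] T = Θ₂ := by
  ext τ
  simp [slash_T_apply, theta2PowFour, theta3PowFour, theta3_one_add]

lemma theta2PowFour_slash_S : Θ₂ ∣[(2 : ℤ)] S = -Θ₁ := by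
  ext τ
  have hτ := τ.ne_zero
  rw [SlashInvariantForm.slash_S_apply, theta2PowFour, UpperHalfPlane.coe_mk,
    theta2_neg_inv_pow_four τ.im_pos, Pi.neg_apply, theta1PowFour]
  field_simp

lemma theta1PowFour_slash_S : Θ₁ ∣[(2 : ℤ)] S = -Θ₂ := by
  rw [← neg_neg Θ₁, ← theta2PowFour_slash_S, SlashAction.neg_slash, slash_S_slash_S _ even_two]

lemma theta3PowFour_slash_S : Θ₃ ∣[(2 : ℤ)] S = -Θ₃ := by
  rw [S_eq_T_mul_S_mul_T_mul_S_mul_T]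
  simp only [SlashAction.slash_mul, SlashAction.neg_slash, theta3PowFour_slash_T,
    theta2PowFour_slash_S, theta1PowFour_slash_T, theta1PowFour_slash_S, theta2PowFour_slash_T,
    neg_neg]

lemma theta2PowFour_eq_eulerFunction :
    Θ₂ = fun τ : ℍ ↦ (φ (𝕢 2 τ) ^ 2 / φ (𝕢 2 τ ^ 2)) ^ 4 :=
  funext fun τ ↦ congrArg (· ^ 4) (theta2_eq_eulerFunction τ.im_pos)

lemma mdifferentiable_theta2PowFour : MDiff Θ₂ :=
  theta2PowFour_eq_eulerFunction ▸ mdifferentiable_comp_qParam two_pos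
    (differentiableOn_eulerFunction_sq_div_eulerFunction_comp_sq.pow 4)

lemma mdifferentiable_theta3PowFour : MDiff Θ₃ :=
  theta2PowFour_slash_T ▸ mdifferentiable_theta2PowFour.slash 2 (T : GL (Fin 2) ℝ)

lemma isBoundedAtImInfty_theta1PowFour : IsBoundedAtImInfty Θ₁ := by
  have hleading : IsBoundedAtImInfty fun τ : ℍ ↦ (2 * 𝕢 8 τ) ^ 4 :=
    isBoundedAtImInfty_comp_qParam (f := fun q ↦ (2 * q) ^ 4) (by norm_num) (by fun_prop)
  have hquot : IsBoundedAtImInfty fun τ : ℍ ↦ (φ (𝕢 1 τ ^ 2) ^ 2 / φ (𝕢 1 τ)) ^ 4 :=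
    isBoundedAtImInfty_comp_qParam one_pos
      ((differentiableOn_eulerFunction_comp_sq_sq_div_eulerFunction.pow 4).continuousOn.continuousAt
        (Metric.ball_mem_nhds 0 one_pos))
  have hprod : Θ₁ = fun τ : ℍ ↦ (2 * 𝕢 8 τ) ^ 4 * (φ (𝕢 1 τ ^ 2) ^ 2 / φ (𝕢 1 τ)) ^ 4 :=
    funext fun τ ↦ by rw [theta1PowFour, theta1_eq_eulerFunction τ.im_pos, mul_pow]
  exact hprod ▸ hleading.mul hquot

lemma isBoundedAtImInfty_theta2PowFour : IsBoundedAtImInfty Θ₂ :=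
  theta2PowFour_eq_eulerFunction ▸ isBoundedAtImInfty_comp_qParam two_pos
    ((differentiableOn_eulerFunction_sq_div_eulerFunction_comp_sq.pow 4).continuousOn.continuousAt
      (Metric.ball_mem_nhds 0 one_pos))

lemma isBoundedAtImInfty_theta3PowFour : IsBoundedAtImInfty Θ₃ := by
  rw [← theta2PowFour_slash_T, ModularForm.SL_slash]
  exact isBoundedAtImInfty_theta2PowFour.slash 2
    (by simp [Matrix.SpecialLinearGroup.map_apply_coe, ModularGroup.coe_T])

/-- The `SL(2,ℤ)`-orbit of `δ₁`, indexed by the bottom row modulo `2` of a matrix carrying `δ₁` to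
the form in question; the value at the zero vector, which is not such a row, is `0`. -/
noncomputable def deltaFamily (v : Fin 2 → ZMod 2) : ℍ → ℂ :=
  match v 0, v 1 with
  | 0, 0 => 0
  | 0, 1 => (8⁻¹ : ℂ) • (Θ₂ + Θ₃)
  | 1, 0 => -(8⁻¹ : ℂ) • (Θ₁ + Θ₃)
  | 1, 1 => (8⁻¹ : ℂ) • (Θ₁ - Θ₂)

@[simp] lemma deltaFamily_zero_zero : deltaFamily ![0, 0] = 0 := rfl

@[simp] lemma deltaFamily_zero_one : deltaFamily ![0, 1] = (8⁻¹ : ℂ) • (Θ₂ + Θ₃) := rfl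

@[simp] lemma deltaFamily_one_zero : deltaFamily ![1, 0] = -(8⁻¹ : ℂ) • (Θ₁ + Θ₃) := rfl

@[simp] lemma deltaFamily_one_one : deltaFamily ![1, 1] = (8⁻¹ : ℂ) • (Θ₁ - Θ₂) := rfl

lemma zmod_two_vec_cases (v : Fin 2 → ZMod 2) :
    v = ![0, 0] ∨ v = ![0, 1] ∨ v = ![1, 0] ∨ v = ![1, 1] := by
  revert v
  decide

lemma deltaFamily_slash_S (v : Fin 2 → ZMod 2) :
    deltaFamily v ∣[(2 : ℤ)] S = deltaFamily (v ᵥ* S) := by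
  rcases zmod_two_vec_cases v with rfl | rfl | rfl | rfl <;>
    rw [vecMul_S] <;>
    simp [theta1PowFour_slash_S, theta2PowFour_slash_S, theta3PowFour_slash_S, sub_eq_add_neg,
      SlashAction.add_slash, SlashAction.neg_slash, ModularForm.SL_smul_slash, add_comm]

lemma deltaFamily_slash_T (v : Fin 2 → ZMod 2) :
    deltaFamily v ∣[(2 : ℤ)] T = deltaFamily (v ᵥ* T) := by
  rcases zmod_two_vec_cases v with rfl | rfl | rfl | rfl <;>
    rw [vecMul_T] <;>
    simp [theta1PowFour_slash_T, theta2PowFour_slash_T, theta3PowFour_slash_T, sub_eq_add_neg,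
      SlashAction.add_slash, SlashAction.neg_slash, ModularForm.SL_smul_slash,
      CharTwo.add_self_eq_zero, add_comm]

lemma isBoundedAtImInfty_deltaFamily (v : Fin 2 → ZMod 2) :
    IsBoundedAtImInfty (deltaFamily v) := by
  have h₁ := isBoundedAtImInfty_theta1PowFour
  have h₂ := isBoundedAtImInfty_theta2PowFour
  have h₃ := isBoundedAtImInfty_theta3PowFour
  rcases zmod_two_vec_cases v with rfl | rfl | rfl | rfl
  · exact Filter.zero_zeroAtFilter _ |>.boundedAtFilter
  · exact (h₂.add h₃).smul _
  · exact (h₁.add h₃).smul _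
  · exact (sub_eq_add_neg Θ₁ Θ₂ ▸ h₁.add h₂.neg).smul _

lemma mdifferentiable_deltaFamily_zero_one : MDiff (deltaFamily ![0, 1]) :=
  (mdifferentiable_theta2PowFour.add mdifferentiable_theta3PowFour).const_smul _

/-- `δ₁` is a modular form of weight `2` over `Γ₀(2)`: there is a modular form of weight `2`
over `Γ₀(2)` (holomorphic on `ℍ`, holomorphic at the cusps, transforming with weight `2` under
`Γ₀(2)`) that coincides with `δ₁` on the upper half-plane. -/
theorem delta1_modular_form_weight_two_Gamma0_two :
    ∃ F : ModularForm (Gamma0 2) 2, ∀ τ : ℍ, F τ = delta1 (τ : ℂ) := by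
  rw [Gamma0_two_eq_Gamma1_two]
  obtain ⟨F, hF⟩ := exists_modularForm_Gamma1_of_slash_S_of_slash_T deltaFamily_slash_S
    deltaFamily_slash_T mdifferentiable_deltaFamily_zero_one isBoundedAtImInfty_deltaFamily
  refine ⟨F, fun τ ↦ ?_⟩
  rw [hF, deltaFamily_zero_one, delta1, div_eq_inv_mul]
  rfl
end

section
/- For every τ in the upper half-plane, ε2(-1/τ) = τ^4 ε1(τ). -/
open Complex Real

/-- `ε₁(τ) = θ₂(0,τ)⁴ θ₃(0,τ)⁴/16`. -/
noncomputable def epsilon1 (τ : ℂ) : ℂ := theta2 τ ^ 4 * theta3 τ ^ 4 / 16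

/-- `ε₂(τ) = θ₁(0,τ)⁴ θ₃(0,τ)⁴/16`. -/
noncomputable def epsilon2 (τ : ℂ) : ℂ := theta1 τ ^ 4 * theta3 τ ^ 4 / 16

/-! Identities between `q`-Pochhammer symbols turn the theta constants into quotients of values of
the Dedekind eta function, and then `ε₁(τ) = η(τ)¹⁶ / (16 η(2τ)⁸)` and `ε₂(τ) = η(τ)¹⁶ / η(τ/2)⁸`.
Since `(-1/τ)/2 = -1/(2τ)`, the formula `η(-1/τ)⁸ = τ⁴ η(τ)⁸` applies to both the numerator and the
denominator of `ε₂(-1/τ)`, and produces the factor `τ⁸ / (2τ)⁴ = τ⁴ / 16`. -/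

section QPochhammer

/-- The infinite `q`-Pochhammer symbol `(a; q)_∞ = ∏_{n ≥ 0} (1 - a qⁿ)`, the common building block
of the theta constants and of the eta function. By the convention for `∏'`, it is `1` if the product
does not converge unconditionally. -/
noncomputable def qPochhammerInf {R : Type*} [CommRing R] [TopologicalSpace R] (a q : R) : R :=
  ∏' n : ℕ, (1 - a * q ^ n)

theorem norm_sq_lt_one_of_norm_lt_one {R : Type*} [SeminormedRing R] {q : R}
    (hq : ‖q‖ < 1) : ‖q ^ 2‖ < 1 :=
  (norm_pow_le' q two_pos).trans_lt (pow_lt_one₀ (norm_nonneg q) hq two_ne_zero)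

variable {R : Type*} [NormedCommRing R] [NormOneClass R] [CompleteSpace R] {q : R}

theorem multipliable_one_sub_mul_pow (a : R) (hq : ‖q‖ < 1) :
    Multipliable fun n : ℕ ↦ 1 - a * q ^ n := by
  simp only [sub_eq_add_neg]
  refine multipliable_one_add_of_summable ?_
  simpa only [norm_neg] using
    ((summable_norm_geometric_of_norm_lt_one hq).mul_left ‖a‖).of_nonneg_of_le
      (fun _ ↦ norm_nonneg _) fun n ↦ norm_mul_le a (q ^ n)

theorem tprod_one_sub_mul_one_sub_sq (a b : R) (hq : ‖q‖ < 1) :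
    ∏' n : ℕ, ((1 - a * q ^ n) * (1 - b * q ^ n) ^ 2) =
      qPochhammerInf a q * qPochhammerInf b q ^ 2 := by
  have hb := multipliable_one_sub_mul_pow b hq
  rw [(multipliable_one_sub_mul_pow a hq).tprod_mul (hb.pow 2), hb.tprod_pow]
  rfl

theorem qPochhammerInf_mul_qPochhammerInf_neg (a : R) (hq : ‖q‖ < 1) :
    qPochhammerInf a q * qPochhammerInf (-a) q = qPochhammerInf (a ^ 2) (q ^ 2) := by
  unfold qPochhammerInf
  rw [← (multipliable_one_sub_mul_pow a hq).tprod_mul (multipliable_one_sub_mul_pow (-a) hq)]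
  exact tprod_congr fun n ↦ by ring

theorem qPochhammerInf_even_mul_odd (a : R) (hq : ‖q‖ < 1) :
    qPochhammerInf a (q ^ 2) * qPochhammerInf (a * q) (q ^ 2) = qPochhammerInf a q := by
  have hq2 := norm_sq_lt_one_of_norm_lt_one hq
  have even_term (n : ℕ) : 1 - a * (q ^ 2) ^ n = 1 - a * q ^ (2 * n) := by rw [pow_mul]
  have odd_term (n : ℕ) : 1 - a * q * (q ^ 2) ^ n = 1 - a * q ^ (2 * n + 1) := by ring
  calc
    _ = (∏' n : ℕ, (1 - a * q ^ (2 * n))) * ∏' n : ℕ, (1 - a * q ^ (2 * n + 1)) :=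
      congr_arg₂ (· * ·) (tprod_congr even_term) (tprod_congr odd_term)
    _ = _ := tprod_even_mul_odd (f := fun n ↦ 1 - a * q ^ n)
      ((multipliable_congr even_term).1 (multipliable_one_sub_mul_pow a hq2))
      ((multipliable_congr odd_term).1 (multipliable_one_sub_mul_pow (a * q) hq2))

theorem qPochhammerInf_self_mul_neg_sq_mul_pow_four (hq : ‖q‖ < 1) :
    qPochhammerInf q q * qPochhammerInf (-q) (q ^ 2) * qPochhammerInf (q ^ 4) (q ^ 4) =
      qPochhammerInf (q ^ 2) (q ^ 2) ^ 2 := by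
  have hq2 := norm_sq_lt_one_of_norm_lt_one hq
  calc
    _ = qPochhammerInf q q * qPochhammerInf (-q) (q ^ 2) *
        (qPochhammerInf (q ^ 2) (q ^ 2) * qPochhammerInf (-q * q) (q ^ 2)) := by
      rw [neg_mul, ← sq, qPochhammerInf_mul_qPochhammerInf_neg _ hq2, ← pow_mul]
    _ = qPochhammerInf q q *
        (qPochhammerInf (-q) (q ^ 2) * qPochhammerInf (-q * q) (q ^ 2)) *
        qPochhammerInf (q ^ 2) (q ^ 2) := by ring
    _ = _ := by
      rw [qPochhammerInf_even_mul_odd _ hq, qPochhammerInf_mul_qPochhammerInf_neg _ hq, ← sq]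

end QPochhammer

section EtaQuotients

open scoped ModularForm

variable {τ : ℂ}

theorem qh_sq (τ : ℂ) : qh τ ^ 2 = qq τ := by
  rw [qh, qq, ← Complex.exp_nat_mul]
  ring_nf

theorem qq_div_two (τ : ℂ) : qq (τ / 2) = qh τ := by
  rw [qh, qq]
  ring_nf

theorem qq_two_mul (τ : ℂ) : qq (2 * τ) = qq τ ^ 2 := by
  rw [← qh_sq, ← qq_div_two, mul_div_cancel_left₀ τ two_ne_zero]

theorem norm_qq_lt_one (hτ : 0 < τ.im) : ‖qq τ‖ < 1 :=
  UpperHalfPlane.norm_exp_two_pi_I_lt_one ⟨τ, hτ⟩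

theorem im_div_two_pos (hτ : 0 < τ.im) : 0 < (τ / 2).im := by
  simpa using hτ

theorem im_two_mul_pos (hτ : 0 < τ.im) : 0 < (2 * τ).im := by
  simpa using hτ

theorem im_neg_one_div_pos (hτ : 0 < τ.im) : 0 < (-1 / τ).im := by
  simpa [neg_div, ← inv_neg] using UpperHalfPlane.im_inv_neg_coe_pos ⟨τ, hτ⟩

theorem norm_qh_lt_one (hτ : 0 < τ.im) : ‖qh τ‖ < 1 :=
  qq_div_two τ ▸ norm_qq_lt_one (im_div_two_pos hτ)

theorem eta_eq_exp_mul_qPochhammerInf (τ : ℂ) :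
    η τ = cexp (π * I * τ / 12) * qPochhammerInf (qq τ) (qq τ) := by
  have exponent : 2 * π * I * τ / (24 : ℝ) = π * I * τ / 12 := by
    push_cast
    ring
  simp_rw [ModularForm.eta, ModularForm.eta_q_eq_pow, Function.Periodic.qParam, exponent,
    qPochhammerInf, qq, pow_succ']

theorem theta1_eq_exp_mul_qPochhammerInf (hτ : 0 < τ.im) :
    theta1 τ = 2 * cexp (π * I * τ / 4) *
      (qPochhammerInf (qq τ) (qq τ) * qPochhammerInf (-qq τ) (qq τ) ^ 2) := by
  rw [theta1, ← tprod_one_sub_mul_one_sub_sq _ _ (norm_qq_lt_one hτ)]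
  simp only [pow_succ' (qq τ), neg_mul, sub_neg_eq_add]

theorem theta2_eq_qPochhammerInf (hτ : 0 < τ.im) :
    theta2 τ = qPochhammerInf (qq τ) (qq τ) * qPochhammerInf (qh τ) (qq τ) ^ 2 := by
  rw [theta2, ← tprod_one_sub_mul_one_sub_sq _ _ (norm_qq_lt_one hτ)]
  simp only [pow_succ' (qh τ) (2 * _), pow_succ' (qq τ), pow_mul, qh_sq]

theorem theta3_eq_qPochhammerInf (hτ : 0 < τ.im) :
    theta3 τ = qPochhammerInf (qq τ) (qq τ) * qPochhammerInf (-qh τ) (qq τ) ^ 2 := by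
  rw [theta3, ← tprod_one_sub_mul_one_sub_sq _ _ (norm_qq_lt_one hτ)]
  simp only [pow_succ' (qh τ) (2 * _), pow_succ' (qq τ), pow_mul, qh_sq, neg_mul, sub_neg_eq_add]

theorem theta1_eq_eta_quotient (hτ : 0 < τ.im) : theta1 τ = 2 * η (2 * τ) ^ 2 / η τ := by
  have exp_eq : cexp (π * I * τ / 4) * cexp (π * I * τ / 12) = cexp (π * I * (2 * τ) / 12) ^ 2 := by
    rw [← Complex.exp_add, ← Complex.exp_nat_mul]
    ring_nf
  have prod_eq := qPochhammerInf_mul_qPochhammerInf_neg (qq τ) (norm_qq_lt_one hτ)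
  rw [eq_div_iff (ModularForm.eta_ne_zero hτ), theta1_eq_exp_mul_qPochhammerInf hτ,
    eta_eq_exp_mul_qPochhammerInf, eta_eq_exp_mul_qPochhammerInf, qq_two_mul, mul_pow, ← exp_eq,
    ← prod_eq]
  ring

theorem theta2_eq_eta_quotient (hτ : 0 < τ.im) : theta2 τ = η (τ / 2) ^ 2 / η τ := by
  have exp_eq : cexp (π * I * τ / 12) = cexp (π * I * (τ / 2) / 12) ^ 2 := by
    rw [← Complex.exp_nat_mul]
    ring_nf
  have prod_eq : qPochhammerInf (qh τ) (qq τ) * qPochhammerInf (qq τ) (qq τ) =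
      qPochhammerInf (qh τ) (qh τ) := by
    simpa only [← sq, qh_sq] using qPochhammerInf_even_mul_odd (qh τ) (norm_qh_lt_one hτ)
  rw [eq_div_iff (ModularForm.eta_ne_zero hτ), theta2_eq_qPochhammerInf hτ,
    eta_eq_exp_mul_qPochhammerInf, eta_eq_exp_mul_qPochhammerInf, qq_div_two, exp_eq, ← prod_eq]
  ring

theorem theta3_eq_eta_quotient (hτ : 0 < τ.im) :
    theta3 τ = η τ ^ 5 / (η (τ / 2) ^ 2 * η (2 * τ) ^ 2) := by
  have hη_half : η (τ / 2) ≠ 0 := ModularForm.eta_ne_zero (im_div_two_pos hτ)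
  have hη_two : η (2 * τ) ≠ 0 := ModularForm.eta_ne_zero (im_two_mul_pos hτ)
  have exp_eq : cexp (π * I * (τ / 2) / 12) ^ 2 * cexp (π * I * (2 * τ) / 12) ^ 2 =
      cexp (π * I * τ / 12) ^ 5 := by
    simp only [← Complex.exp_nat_mul, ← Complex.exp_add]
    ring_nf
  have prod_eq : qPochhammerInf (qh τ) (qh τ) * qPochhammerInf (-qh τ) (qq τ) *
      qPochhammerInf (qq τ ^ 2) (qq τ ^ 2) = qPochhammerInf (qq τ) (qq τ) ^ 2 := by
    simpa only [← qh_sq, ← pow_mul] using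
      qPochhammerInf_self_mul_neg_sq_mul_pow_four (norm_qh_lt_one hτ)
  rw [eq_div_iff (mul_ne_zero (pow_ne_zero 2 hη_half) (pow_ne_zero 2 hη_two)),
    theta3_eq_qPochhammerInf hτ]
  simp only [eta_eq_exp_mul_qPochhammerInf, qq_div_two, qq_two_mul, mul_pow]
  rw [← exp_eq, show 5 = 1 + 2 * 2 from rfl, pow_add, pow_mul _ 2 2, ← prod_eq]
  ring

theorem epsilon1_eq_eta_quotient (hτ : 0 < τ.im) :
    epsilon1 τ = η τ ^ 16 / (16 * η (2 * τ) ^ 8) := by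
  have hη : η τ ≠ 0 := ModularForm.eta_ne_zero hτ
  have hη_half : η (τ / 2) ≠ 0 := ModularForm.eta_ne_zero (im_div_two_pos hτ)
  rw [epsilon1, theta2_eq_eta_quotient hτ, theta3_eq_eta_quotient hτ]
  field_simp

theorem epsilon2_eq_eta_quotient (hτ : 0 < τ.im) :
    epsilon2 τ = η τ ^ 16 / η (τ / 2) ^ 8 := by
  have hη : η τ ≠ 0 := ModularForm.eta_ne_zero hτ
  have hη_two : η (2 * τ) ≠ 0 := ModularForm.eta_ne_zero (im_two_mul_pos hτ)
  rw [epsilon2, theta1_eq_eta_quotient hτ, theta3_eq_eta_quotient hτ]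
  field_simp
  norm_num

theorem eta_neg_one_div_sq (hτ : 0 < τ.im) : η (-1 / τ) ^ 2 = -I * τ * η τ ^ 2 := by
  have sqrt_sq (z : ℂ) : Complex.sqrt z ^ 2 = z := Complex.cpow_ofNat_inv_pow z 2
  have eta_S : η (-1 / τ) = (Complex.sqrt I)⁻¹ * (Complex.sqrt τ * η τ) :=
    ModularForm.eta_comp_eq_csqrt_I_inv hτ
  rw [eta_S, mul_pow, mul_pow, inv_pow, sqrt_sq, sqrt_sq, inv_I, mul_assoc]

theorem eta_neg_one_div_pow_eight (hτ : 0 < τ.im) : η (-1 / τ) ^ 8 = τ ^ 4 * η τ ^ 8 := by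
  rw [show 8 = 2 * 4 from rfl, pow_mul, eta_neg_one_div_sq hτ, mul_pow, mul_pow, neg_pow,
    I_pow_four, ← pow_mul]
  norm_num

end EtaQuotients

/-- For every `τ` in the upper half-plane, `ε₂(-1/τ) = τ⁴ ε₁(τ)`. -/
theorem epsilon2_neg_inv (τ : ℂ) (hτ : 0 < τ.im) :
    epsilon2 (-1 / τ) = τ ^ 4 * epsilon1 τ := by
  have hS : 0 < (-1 / τ).im := im_neg_one_div_pos hτ
  have h2τ : 0 < (2 * τ).im := im_two_mul_pos hτ
  have hτ0 : τ ≠ 0 := fun h ↦ by simp [h] at hτ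
  have half_S : -1 / τ / 2 = -1 / (2 * τ) := by field_simp
  rw [epsilon2_eq_eta_quotient hS, epsilon1_eq_eta_quotient hτ, half_S,
    eta_neg_one_div_pow_eight h2τ, show 16 = 8 * 2 from rfl, pow_mul,
    eta_neg_one_div_pow_eight hτ]
  field
end

section
/- The Eisenstein series E2 satisfies the quasi-modular transformation laws E2(τ+1) = E2(τ) and E2(-1/τ) = τ^2 E2(τ) - 6√(-1) τ/π for every τ in the upper half-plane. -/
open Complex Real

/-- The sum-of-divisors function `σ₁(n) = Σ_{d ∣ n} d`. -/
def sigma1 (n : ℕ) : ℕ := ∑ d ∈ n.divisors, d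

/-- The quasi-modular Eisenstein series `E₂(τ) = 1 - 24 Σ_{n≥1} σ₁(n) e^{2πinτ}`. -/
noncomputable def E2 (τ : ℂ) : ℂ :=
  1 - 24 * ∑' n : ℕ, (sigma1 (n + 1) : ℂ) * Complex.exp (2 * π * Complex.I * τ) ^ (n + 1)

/-
The translation law is the 1-periodicity of `q`. For the inversion, the `q`-series is the
normalised lattice sum `∑ (mτ + n)⁻²`, which converges only conditionally: interchanging the order
of summation produces a correction term. The resulting defect of modularity is the cocycle
`EisensteinSeries.D2`, and the inversion law is its value at `S`.
-/

theorem E2_periodic : Function.Periodic E2 1 := fun τ ↦ by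
  have hq : Complex.exp (2 * π * Complex.I * (τ + 1)) = Complex.exp (2 * π * Complex.I * τ) := by
    rw [mul_add_one]
    exact Complex.exp_periodic _
  simp only [E2, hq]

section UpperHalfPlane

open scoped UpperHalfPlane MatrixGroups

theorem E2_coe_upperHalfPlane (z : ℍ) : E2 z = EisensteinSeries.E2 z := by
  rw [EisensteinSeries.E2_eq_tsum_cexp, E2,
    tsum_pnat_eq_tsum_succ (f := fun n : ℕ ↦
      (ArithmeticFunction.sigma 1 n : ℂ) * Complex.exp (2 * π * Complex.I * z) ^ n)]
  simp only [sigma1, ArithmeticFunction.sigma_one_apply]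

theorem E2_coe_smul (γ : SL(2, ℤ)) (z : ℍ) :
    E2 ↑(γ • z) = UpperHalfPlane.denom γ z ^ 2 * E2 z -
      6 * Complex.I * (γ 1 0 : ℂ) * UpperHalfPlane.denom γ z / π := by
  have hdenom : UpperHalfPlane.denom γ z ≠ 0 := UpperHalfPlane.denom_ne_zero γ z
  have hpi : (π : ℂ) ≠ 0 := Complex.ofReal_ne_zero.mpr Real.pi_ne_zero
  have hslash : EisensteinSeries.E2 (γ • z) * UpperHalfPlane.denom γ z ^ (-2 : ℤ) =
      EisensteinSeries.E2 z - 1 / (2 * riemannZeta 2) * EisensteinSeries.D2 γ z :=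
    (ModularForm.SL_slash_apply _ γ z).symm.trans
      (congrFun (EisensteinSeries.E2_slash_action γ) z)
  rw [zpow_neg, ← div_eq_mul_inv, div_eq_iff (zpow_ne_zero 2 hdenom), riemannZeta_two,
    EisensteinSeries.D2] at hslash
  rw [E2_coe_upperHalfPlane, E2_coe_upperHalfPlane, hslash]
  field_simp

theorem E2_neg_one_div_coe (z : ℍ) :
    E2 (-1 / z) = z ^ 2 * E2 z - 6 * Complex.I * z / π := by
  have hS : ((ModularGroup.S • z : ℍ) : ℂ) = -1 / z := by
    rw [UpperHalfPlane.modular_S_smul, UpperHalfPlane.coe_mk, inv_neg, neg_div, one_div]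
  have hc : ModularGroup.S 1 0 = 1 := rfl
  simpa only [hS, ModularGroup.denom_S, hc, Int.cast_one, mul_one] using
    E2_coe_smul ModularGroup.S z

end UpperHalfPlane

/-- The Eisenstein series `E₂` satisfies the quasi-modular transformation laws
`E₂(τ+1) = E₂(τ)` and `E₂(-1/τ) = τ² E₂(τ) - 6√(-1) τ/π` for every `τ` in the upper
half-plane. -/
theorem E2_transformation (τ : ℂ) (hτ : 0 < τ.im) :
    E2 (τ + 1) = E2 τ ∧
    E2 (-1 / τ) = τ ^ 2 * E2 τ - 6 * Complex.I * τ / (π : ℂ) :=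
  ⟨E2_periodic τ, E2_neg_one_div_coe ⟨τ, hτ⟩⟩
end

section
/- Every modular form f of weight 10 for the full modular group SL2(ℤ) is a constant multiple of E4(τ) E6(τ): there exists c ∈ ℂ with f(τ) = c · E4(τ) E6(τ) for all τ in the upper half-plane. -/
open Complex Real

local notation "SL(2,ℤ)" => Matrix.SpecialLinearGroup (Fin 2) ℤ
local notation "ℍ" => UpperHalfPlane

/-- The divisor power sum `σ_k(n) = Σ_{d ∣ n} d^k`. -/
def sigma' (k n : ℕ) : ℕ := ∑ d ∈ n.divisors, d ^ k

/-- The Eisenstein series `E₄(τ) = 1 + 240 Σ_{n≥1} σ₃(n) e^{2πinτ}`. -/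
noncomputable def E4 (τ : ℂ) : ℂ :=
  1 + 240 * ∑' n : ℕ, (sigma' 3 (n + 1) : ℂ) * Complex.exp (2 * π * Complex.I * τ) ^ (n + 1)

/-- The Eisenstein series `E₆(τ) = 1 - 504 Σ_{n≥1} σ₅(n) e^{2πinτ}`. -/
noncomputable def E6 (τ : ℂ) : ℂ :=
  1 - 504 * ∑' n : ℕ, (sigma' 5 (n + 1) : ℂ) * Complex.exp (2 * π * Complex.I * τ) ^ (n + 1)

/-!
A cusp form of level one is the product of the discriminant, a nowhere vanishing cusp form of
weight `12`, with a modular form of weight lower by `12`, so in weight less than `12` every cusp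
form is zero. A modular form of such a weight is therefore determined by the constant term of its
`q`-expansion. As `E₄ E₆` has constant term `1`, a form `f` of weight `10` equals `a₀(f) E₄ E₆`.
-/

section QSeries

theorem bernoulli_four : bernoulli 4 = -1 / 30 := by
  rw [bernoulli_eq_bernoulli'_of_ne_one (by norm_num), bernoulli'_four]

theorem bernoulli_six : bernoulli 6 = 1 / 42 := by
  have bernoulli'_five : bernoulli' 5 = 0 :=
    bernoulli'_eq_zero_of_odd (by decide) (by norm_num)
  rw [bernoulli_eq_bernoulli'_of_ne_one (by norm_num), bernoulli'_def]
  norm_num [Finset.sum_range_succ, Nat.choose, bernoulli'_five]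

theorem tsum_sigma'_succ_mul_pow (k : ℕ) (x : ℂ) :
    ∑' n : ℕ, (sigma' k (n + 1) : ℂ) * x ^ (n + 1) =
      ∑' n : ℕ+, (ArithmeticFunction.sigma k n : ℂ) * x ^ (n : ℕ) := by
  simp only [sigma', ← ArithmeticFunction.sigma_apply]
  exact (tsum_pnat_eq_tsum_succ
    (f := fun n : ℕ ↦ (ArithmeticFunction.sigma k n : ℂ) * x ^ n)).symm

theorem E_apply_eq_one_sub_tsum_sigma' {k : ℕ} (hk : 3 ≤ k) (hk_even : Even k) (τ : ℍ) :
    ModularForm.E hk τ = 1 - 2 * k / bernoulli k *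
      ∑' n : ℕ, (sigma' (k - 1) (n + 1) : ℂ) * Complex.exp (2 * π * Complex.I * τ) ^ (n + 1) := by
  simp only [EisensteinSeries.q_expansion_bernoulli hk hk_even, tsum_sigma'_succ_mul_pow,
    zpow_natCast]

theorem E4_coe_eq_E₄ (τ : ℍ) : E4 τ = ModularForm.E₄ τ := by
  rw [E_apply_eq_one_sub_tsum_sigma' _ ⟨2, rfl⟩, E4, bernoulli_four]
  norm_num

theorem E6_coe_eq_E₆ (τ : ℍ) : E6 τ = ModularForm.E₆ τ := by
  rw [E_apply_eq_one_sub_tsum_sigma' _ ⟨3, rfl⟩, E6, bernoulli_six]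
  norm_num

end QSeries

section ConstantTerm

open UpperHalfPlane ModularForm EisensteinSeries
open scoped MatrixGroups

theorem eq_zero_of_isCuspForm_of_weight_lt_twelve {k : ℤ} (hk : k < 12) {f : ModularForm 𝒮ℒ k}
    (hf : IsCuspForm f) : f = 0 := by
  obtain ⟨g, rfl⟩ := hf
  have hg : g = 0 := rank_zero_iff_forall_zero.mp (CuspForm.rank_eq_zero_of_weight_lt_twelve hk) g
  rw [hg, map_zero]

theorem eq_coeff_zero_smul_of_weight_lt_twelve {k : ℤ} (hk : k < 12) (f : ModularForm 𝒮ℒ k)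
    {g : ModularForm 𝒮ℒ k} (hg : (qExpansion 1 g).coeff 0 = 1) :
    f = (qExpansion 1 f).coeff 0 • g :=
  sub_eq_zero.mp (eq_zero_of_isCuspForm_of_weight_lt_twelve hk (sub_smul_isCuspForm f g hg))

theorem qExpansion_E_mul_E_coeff_zero {k l : ℕ} (hk : 3 ≤ k) (hk_even : Even k) (hl : 3 ≤ l)
    (hl_even : Even l) : (qExpansion 1 ((E hk).mul (E hl))).coeff 0 = 1 := by
  rw [ModularForm.qExpansion_mul one_pos one_mem_strictPeriods_SL, PowerSeries.coeff_mul,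
    Finset.Nat.antidiagonal_zero, Finset.sum_singleton, E_qExpansion_coeff_zero hk hk_even,
    E_qExpansion_coeff_zero hl hl_even, one_mul]

theorem eq_coeff_zero_smul_E_mul_E {k l : ℕ} (hk : 3 ≤ k) (hk_even : Even k) (hl : 3 ≤ l)
    (hl_even : Even l) (hkl : k + l < 12) (f : ModularForm 𝒮ℒ (k + l)) :
    f = (qExpansion 1 f).coeff 0 • (E hk).mul (E hl) :=
  eq_coeff_zero_smul_of_weight_lt_twelve (mod_cast hkl) f
    (qExpansion_E_mul_E_coeff_zero hk hk_even hl hl_even)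

end ConstantTerm

/-- Every modular form of weight `10` for the full modular group `SL(2,ℤ)` is a constant
multiple of `E₄ E₆`. -/
theorem weight_ten_eq_const_mul_E4_E6
    (f : ModularForm (⊤ : Subgroup SL(2,ℤ)) 10) :
    ∃ c : ℂ, ∀ τ : ℍ, f τ = c * E4 (τ : ℂ) * E6 (τ : ℂ) := by
  let g : ModularForm (Matrix.SpecialLinearGroup.mapGL ℝ).range ((4 : ℕ) + (6 : ℕ)) :=
    f.mcast (by norm_num) (MonoidHom.range_eq_map _)
  have hg : g = (UpperHalfPlane.qExpansion 1 g).coeff 0 • ModularForm.E₄.mul ModularForm.E₆ :=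
    eq_coeff_zero_smul_E_mul_E _ ⟨2, rfl⟩ _ ⟨3, rfl⟩ (by norm_num) g
  refine ⟨(UpperHalfPlane.qExpansion 1 g).coeff 0, fun τ ↦ ?_⟩
  rw [E4_coe_eq_E₄, E6_coe_eq_E₆, mul_assoc]
  exact DFunLike.congr_fun hg τ
end
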